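/- Assume Λ₀ ≥ 0. Then the intersection of the Fermi surface F_P with the tube 𝒯 = {k ∈ ℂⁿ : Im k ∈ -G} equals the union of translates of -iΞ by the reciprocal lattice: F_P ∩ 𝒯 = {-iξ + γ : ξ ∈ Ξ, γ ∈ (2πℤ)ⁿ}. -/

import Mathlib

/-!
Every `ξ` in the convex hull of `Ξ` carries a positive supersolution `v = e^{ξ·x + q(x)}` with `q`
periodic: a weighted geometric mean of the positive solutions attached to points of `Ξ`. In terms
of `w = log v` this is concavity of `logP w = e^{-w} P(e^w)`, whose defect is explicit
(`logP_convex`); hence `v` is a genuine solution only when the gradients of the logarithms of the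
factors agree, and comparing values at lattice points then shows that the factors share the same
exponent, so that `ξ ∈ Ξ` (`superSet_convex`).

Let `u` be a Bloch solution with quasimomentum `k` and `-Im k = ξ`. Then `|u|²/v²` is periodic, so
it attains its maximum. Writing `u = v (F + iH)`, it is a subsolution of an elliptic operator
without zeroth order term, hence constant by the strong maximum principle (`strong_max`). The
resulting equality makes `F` and `H` constant and `Pv = 0` (`rigidity`), so `ξ ∈ Ξ`; and
`u = const · v` forces `e^{i Re k_j} = 1` for every `j` (`fermi_superSet`). The reverse inclusion
rewrites the positive solution with exponent `ξ` as a Bloch solution with shifted quasimomentum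
(`translate_mem_fermi`).
-/

set_option autoImplicit false

open MeasureTheory Filter

noncomputable section

/-- The partial derivative of a function on `ℝⁿ` in the `i`-th coordinate direction. -/
def pd {n : ℕ} {E : Type*} [NormedAddCommGroup E] [NormedSpace ℝ E]
    (i : Fin n) (u : (Fin n → ℝ) → E) (x : Fin n → ℝ) : E :=
  fderiv ℝ u x (Pi.single i 1)

/-- `ℤⁿ`-periodicity of a function on `ℝⁿ`. -/
def ZPeriodic {n : ℕ} {α : Type*} (f : (Fin n → ℝ) → α) : Prop :=
  ∀ (x : Fin n → ℝ) (γ : Fin n → ℤ), f (x + fun i => (γ i : ℝ)) = f x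

/-- The dot product `ξ · x` of two real vectors. -/
def dotR {n : ℕ} (ξ x : Fin n → ℝ) : ℝ := ∑ i, ξ i * x i

/-- The pairing `k · x` of a complex vector `k` with a real vector `x`. -/
def dotCR {n : ℕ} (k : Fin n → ℂ) (x : Fin n → ℝ) : ℂ := ∑ i, k i * (x i : ℂ)

/-- The second-order operator
`Pu(x) = -∑ a_{ij}(x) ∂_i∂_j u(x) + ∑ b_i(x) ∂_i u(x) + c(x) u(x)`
acting on real-valued functions. -/
def Pop {n : ℕ} (a : (Fin n → ℝ) → Fin n → Fin n → ℝ) (b : (Fin n → ℝ) → Fin n → ℝ)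
    (c : (Fin n → ℝ) → ℝ) (u : (Fin n → ℝ) → ℝ) (x : Fin n → ℝ) : ℝ :=
  -(∑ i, ∑ j, a x i j * pd i (pd j u) x) + ∑ i, b x i * pd i u x + c x * u x

/-- The same operator `P` acting on complex-valued functions. -/
def PopC {n : ℕ} (a : (Fin n → ℝ) → Fin n → Fin n → ℝ) (b : (Fin n → ℝ) → Fin n → ℝ)
    (c : (Fin n → ℝ) → ℝ) (u : (Fin n → ℝ) → ℂ) (x : Fin n → ℝ) : ℂ :=
  -(∑ i, ∑ j, (a x i j : ℂ) * pd i (pd j u) x) + ∑ i, (b x i : ℂ) * pd i u x + (c x : ℂ) * u x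

/-- The formal adjoint `P*v = -∑ ∂_i∂_j(a_{ij} v) - ∑ ∂_i(b_i v) + c v`
acting on real-valued functions. -/
def Padj {n : ℕ} (a : (Fin n → ℝ) → Fin n → Fin n → ℝ) (b : (Fin n → ℝ) → Fin n → ℝ)
    (c : (Fin n → ℝ) → ℝ) (v : (Fin n → ℝ) → ℝ) (x : Fin n → ℝ) : ℝ :=
  -(∑ i, ∑ j, pd i (pd j fun z => a z i j * v z) x) - (∑ i, pd i (fun y => b y i * v y) x)
    + c x * v x

/-- The formal adjoint `P*` acting on complex-valued functions. -/
def PadjC {n : ℕ} (a : (Fin n → ℝ) → Fin n → Fin n → ℝ) (b : (Fin n → ℝ) → Fin n → ℝ)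
    (c : (Fin n → ℝ) → ℝ) (v : (Fin n → ℝ) → ℂ) (x : Fin n → ℝ) : ℂ :=
  -(∑ i, ∑ j, pd i (pd j fun z => (a z i j : ℂ) * v z) x)
    - (∑ i, pd i (fun y => (b y i : ℂ) * v y) x) + (c x : ℂ) * v x

/-- The standing assumptions on the operator `P`: the coefficients are real-valued,
`ℤⁿ`-periodic, `a_{ij} ∈ C²`, `b_i ∈ C¹`, `c` continuous, and the uniform ellipticity
condition `∑ a_{ij}(x) ζ_i ζ_j ≥ a₀ |ζ|²` holds. -/
def IsPeriodicElliptic {n : ℕ} (a : (Fin n → ℝ) → Fin n → Fin n → ℝ)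
    (b : (Fin n → ℝ) → Fin n → ℝ) (c : (Fin n → ℝ) → ℝ) : Prop :=
  (∀ i j, ContDiff ℝ 2 fun x => a x i j) ∧ (∀ i, ContDiff ℝ 1 fun x => b x i) ∧
    Continuous c ∧ ZPeriodic a ∧ ZPeriodic b ∧ ZPeriodic c ∧
    ∃ a₀ : ℝ, 0 < a₀ ∧
      ∀ x ζ : Fin n → ℝ, a₀ * ∑ i, ζ i ^ 2 ≤ ∑ i, ∑ j, a x i j * ζ i * ζ j

/-- `lam` is a real number such that `Pu = lam·u` admits a positive solution of the form
`u(x) = e^{ξ·x} p(x)` with `p` positive, `C²` and `ℤⁿ`-periodic. -/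
def IsPrincipalEV {n : ℕ} (a : (Fin n → ℝ) → Fin n → Fin n → ℝ)
    (b : (Fin n → ℝ) → Fin n → ℝ) (c : (Fin n → ℝ) → ℝ) (ξ : Fin n → ℝ) (lam : ℝ) : Prop :=
  ∃ p : (Fin n → ℝ) → ℝ, ContDiff ℝ 2 p ∧ (∀ x, 0 < p x) ∧ ZPeriodic p ∧
    ∀ x, Pop a b c (fun y => Real.exp (dotR ξ y) * p y) x
      = lam * (Real.exp (dotR ξ x) * p x)

/-- The generalized principal eigenvalue
`Λ₀ = sup {λ ∈ ℝ : ∃ u > 0 with Pu = λu in ℝⁿ}`. -/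
def gpev {n : ℕ} (a : (Fin n → ℝ) → Fin n → Fin n → ℝ) (b : (Fin n → ℝ) → Fin n → ℝ)
    (c : (Fin n → ℝ) → ℝ) : ℝ :=
  sSup {lam : ℝ | ∃ u : (Fin n → ℝ) → ℝ, ContDiff ℝ 2 u ∧ (∀ x, 0 < u x) ∧
    ∀ x, Pop a b c u x = lam * u x}

/-- `k` belongs to the Fermi surface `F_P`: the equation `Pu = 0` admits a nonzero Bloch
solution `u(x) = e^{i k·x} p(x)` with `p` `ℤⁿ`-periodic. -/
def InFermi {n : ℕ} (a : (Fin n → ℝ) → Fin n → Fin n → ℝ) (b : (Fin n → ℝ) → Fin n → ℝ)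
    (c : (Fin n → ℝ) → ℝ) (k : Fin n → ℂ) : Prop :=
  ∃ p : (Fin n → ℝ) → ℂ, ContDiff ℝ 2 p ∧ ZPeriodic p ∧ (∃ x, p x ≠ 0) ∧
    ∀ x, PopC a b c (fun y => Complex.exp (Complex.I * dotCR k y) * p y) x = 0

/-- `(k, lam)` belongs to the Bloch variety `B_P`: the equation `Pu = lam·u` admits a
nonzero Bloch solution with quasimomentum `k`. -/
def InBloch {n : ℕ} (a : (Fin n → ℝ) → Fin n → Fin n → ℝ) (b : (Fin n → ℝ) → Fin n → ℝ)
    (c : (Fin n → ℝ) → ℝ) (k : Fin n → ℂ) (lam : ℂ) : Prop :=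
  ∃ p : (Fin n → ℝ) → ℂ, ContDiff ℝ 2 p ∧ ZPeriodic p ∧ (∃ x, p x ≠ 0) ∧
    ∀ x, PopC a b c (fun y => Complex.exp (Complex.I * dotCR k y) * p y) x
      = lam * (Complex.exp (Complex.I * dotCR k x) * p x)

/-- `k` belongs to the Fermi surface `F_{P*}` of the formal adjoint. -/
def InFermiAdj {n : ℕ} (a : (Fin n → ℝ) → Fin n → Fin n → ℝ) (b : (Fin n → ℝ) → Fin n → ℝ)
    (c : (Fin n → ℝ) → ℝ) (k : Fin n → ℂ) : Prop :=
  ∃ p : (Fin n → ℝ) → ℂ, ContDiff ℝ 2 p ∧ ZPeriodic p ∧ (∃ x, p x ≠ 0) ∧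
    ∀ x, PadjC a b c (fun y => Complex.exp (Complex.I * dotCR k y) * p y) x = 0

/-- `(k, lam)` belongs to the Bloch variety `B_{P*}` of the formal adjoint. -/
def InBlochAdj {n : ℕ} (a : (Fin n → ℝ) → Fin n → Fin n → ℝ) (b : (Fin n → ℝ) → Fin n → ℝ)
    (c : (Fin n → ℝ) → ℝ) (k : Fin n → ℂ) (lam : ℂ) : Prop :=
  ∃ p : (Fin n → ℝ) → ℂ, ContDiff ℝ 2 p ∧ ZPeriodic p ∧ (∃ x, p x ≠ 0) ∧
    ∀ x, PadjC a b c (fun y => Complex.exp (Complex.I * dotCR k y) * p y) x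
      = lam * (Complex.exp (Complex.I * dotCR k x) * p x)

/-- The Euclidean norm of an integer vector `γ ∈ ℤⁿ`. -/
def enormZ {n : ℕ} (γ : Fin n → ℤ) : ℝ := Real.sqrt (∑ i, ((γ i : ℝ)) ^ 2)

/-- The support (indicator) function `h_G(x) = sup_{ξ ∈ G} ξ · x` of a set `G ⊆ ℝⁿ`. -/
def suppFn {n : ℕ} (G : Set (Fin n → ℝ)) (x : Fin n → ℝ) : ℝ :=
  sSup ((fun ξ => dotR ξ x) '' G)

/-- The closed tube `𝒯_G = {k ∈ ℂⁿ : Im k ∈ G}` over a set `G ⊆ ℝⁿ`. -/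
def tubeOver {n : ℕ} (G : Set (Fin n → ℝ)) : Set (Fin n → ℂ) :=
  {k | (fun i => (k i).im) ∈ G}

/-! ### Calculus of partial derivatives and second order conditions -/

section Calculus

variable {n : ℕ} {E F : Type*} [NormedAddCommGroup E] [NormedSpace ℝ E]
  [NormedAddCommGroup F] [NormedSpace ℝ F]

lemma pd_contDiff {u : (Fin n → ℝ) → E} (hu : ContDiff ℝ 2 u) (i : Fin n) :
    ContDiff ℝ 1 (pd i u) :=
  (hu.fderiv_right (m := 1) (by norm_num)).clm_apply contDiff_const

lemma pd_continuous {u : (Fin n → ℝ) → E} (hu : ContDiff ℝ 1 u) (i : Fin n) :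
    Continuous (pd i u) :=
  (hu.continuous_fderiv (by norm_num)).clm_apply continuous_const

lemma C2_diff {u : (Fin n → ℝ) → E} (hu : ContDiff ℝ 2 u) : Differentiable ℝ u :=
  hu.differentiable (by norm_num)

lemma C2_pd_diff {u : (Fin n → ℝ) → E} (hu : ContDiff ℝ 2 u) (i : Fin n) :
    Differentiable ℝ (pd i u) :=
  (pd_contDiff hu i).differentiable (by norm_num)

lemma pd_clm (L : E →L[ℝ] F) {u : (Fin n → ℝ) → E} (hu : Differentiable ℝ u) (i : Fin n) :
    pd i (fun x => L (u x)) = fun x => L (pd i u x) := by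
  funext x
  have h := (L.hasFDerivAt.comp x (hu x).hasFDerivAt).fderiv
  have h' : fderiv ℝ (fun x => L (u x)) x = L.comp (fderiv ℝ u x) := h
  simp [pd, h']

lemma pd2_clm (L : E →L[ℝ] F) {u : (Fin n → ℝ) → E} (hu : ContDiff ℝ 2 u) (i j : Fin n)
    (x : Fin n → ℝ) :
    pd i (pd j fun x => L (u x)) x = L (pd i (pd j u) x) := by
  rw [pd_clm L (C2_diff hu), pd_clm L (C2_pd_diff hu j)]

lemma pd_add {u v : (Fin n → ℝ) → E} (hu : Differentiable ℝ u) (hv : Differentiable ℝ v)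
    (i : Fin n) : pd i (fun x => u x + v x) = fun x => pd i u x + pd i v x := by
  funext x
  simp [pd, fderiv_fun_add (hu x) (hv x)]

lemma pd_const_mul {u : (Fin n → ℝ) → ℝ} (hu : Differentiable ℝ u) (r : ℝ)
    (i : Fin n) : pd i (fun x => r * u x) = fun x => r * pd i u x := by
  funext x
  simp [pd, fderiv_const_mul (hu x)]

lemma pd_mul {u v : (Fin n → ℝ) → ℝ} (hu : Differentiable ℝ u) (hv : Differentiable ℝ v)
    (i : Fin n) : pd i (fun x => u x * v x) = fun x => u x * pd i v x + pd i u x * v x := by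
  funext x
  simp [pd, fderiv_fun_mul (hu x) (hv x), mul_comm]

lemma pd_exp {w : (Fin n → ℝ) → ℝ} (hw : Differentiable ℝ w) (i : Fin n) :
    pd i (fun x => Real.exp (w x)) = fun x => Real.exp (w x) * pd i w x := by
  funext x
  simp [pd, fderiv_exp (hw x)]

lemma pd2_add {u v : (Fin n → ℝ) → ℝ} (hu : ContDiff ℝ 2 u) (hv : ContDiff ℝ 2 v)
    (i j : Fin n) (x : Fin n → ℝ) :
    pd i (pd j fun x => u x + v x) x = pd i (pd j u) x + pd i (pd j v) x := by
  rw [pd_add (C2_diff hu) (C2_diff hv), pd_add (C2_pd_diff hu j) (C2_pd_diff hv j)]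

lemma pd2_const_mul {u : (Fin n → ℝ) → ℝ} (hu : ContDiff ℝ 2 u) (r : ℝ)
    (i j : Fin n) (x : Fin n → ℝ) :
    pd i (pd j fun x => r * u x) x = r * pd i (pd j u) x := by
  rw [pd_const_mul (C2_diff hu), pd_const_mul (C2_pd_diff hu j)]

lemma pd2_mul {u v : (Fin n → ℝ) → ℝ} (hu : ContDiff ℝ 2 u) (hv : ContDiff ℝ 2 v)
    (i j : Fin n) (x : Fin n → ℝ) :
    pd i (pd j fun x => u x * v x) x = u x * pd i (pd j v) x + pd i u x * pd j v x
      + pd j u x * pd i v x + pd i (pd j u) x * v x := by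
  have hu1 := C2_pd_diff hu j
  have hv1 := C2_pd_diff hv j
  rw [pd_mul (C2_diff hu) (C2_diff hv),
    pd_add (u := fun x => u x * pd j v x) (v := fun x => pd j u x * v x)
      ((C2_diff hu).mul hv1) (hu1.mul (C2_diff hv)),
    pd_mul (C2_diff hu) hv1, pd_mul hu1 (C2_diff hv)]
  ring

lemma pd2_exp {w : (Fin n → ℝ) → ℝ} (hw : ContDiff ℝ 2 w) (i j : Fin n) (x : Fin n → ℝ) :
    pd i (pd j fun x => Real.exp (w x)) x
      = Real.exp (w x) * (pd i (pd j w) x + pd i w x * pd j w x) := by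
  rw [pd_exp (C2_diff hw), pd_mul (C2_diff hw).exp (C2_pd_diff hw j), pd_exp (C2_diff hw)]
  ring

lemma pd_comm {u : (Fin n → ℝ) → ℝ} (hu : ContDiff ℝ 2 u) (i j : Fin n) (x : Fin n → ℝ) :
    pd i (pd j u) x = pd j (pd i u) x := by
  have key : ∀ i j, pd i (pd j u) x
      = fderiv ℝ (fderiv ℝ u) x (Pi.single i 1) (Pi.single j 1) := by
    intro i j
    have hd : DifferentiableAt ℝ (fderiv ℝ u) x :=
      (hu.fderiv_right (m := 1) (by norm_num)).differentiable (by norm_num) x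
    change fderiv ℝ (fun y => fderiv ℝ u y (Pi.single j 1)) x (Pi.single i 1) = _
    rw [fderiv_clm_apply hd (differentiableAt_const _)]
    simp
  rw [key, key]
  exact (hu.contDiffAt.isSymmSndFDerivAt (by simp)) _ _

lemma fderiv_eq_sum {u : (Fin n → ℝ) → ℝ} (x ζ : Fin n → ℝ) :
    fderiv ℝ u x ζ = ∑ i, ζ i * pd i u x := by
  conv_lhs => rw [pi_eq_sum_univ' ζ]
  simp [pd, map_sum]

/-- A function whose partial derivatives vanish identically is constant. -/
lemma const_of_pd {u : (Fin n → ℝ) → ℝ} (hu : Differentiable ℝ u)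
    (h : ∀ i x, pd i u x = 0) (x y : Fin n → ℝ) : u x = u y := by
  refine is_const_of_fderiv_eq_zero hu (fun z => ?_) x y
  ext ζ
  simp [fderiv_eq_sum, h]

/-- The first and second order necessary conditions at a local maximum. -/
lemma localMax_cond {u : (Fin n → ℝ) → ℝ} (hu : ContDiff ℝ 2 u) {z : Fin n → ℝ}
    (hz : IsLocalMax u z) :
    (∀ i, pd i u z = 0) ∧ ∀ ζ : Fin n → ℝ, ∑ i, ∑ j, ζ i * ζ j * pd i (pd j u) z ≤ 0 := by
  have h0 : ∀ i, pd i u z = 0 := fun i => by simp [pd, hz.fderiv_eq_zero]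
  refine ⟨h0, fun ζ => ?_⟩
  by_contra! hpos
  have hline : ∀ t : ℝ, HasDerivAt (fun t : ℝ => z + t • ζ) ζ t := fun t => by
    simpa using ((hasDerivAt_id t).smul_const ζ).const_add z
  have hd1 : ∀ v : (Fin n → ℝ) → ℝ, Differentiable ℝ v → ∀ t : ℝ,
      HasDerivAt (fun t : ℝ => v (z + t • ζ)) (∑ i, ζ i * pd i v (z + t • ζ)) t := by
    intro v hv t
    rw [← fderiv_eq_sum]
    exact (hv _).hasFDerivAt.comp_hasDerivAt t (hline t)
  set φ : ℝ → ℝ := fun t => u (z + t • ζ) with hφ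
  have hφ1 : deriv φ = fun t => ∑ j, ζ j * pd j u (z + t • ζ) := by
    funext t; exact (hd1 u (C2_diff hu) t).deriv
  have hφ2 : deriv (deriv φ) 0 = ∑ i, ∑ j, ζ i * ζ j * pd i (pd j u) z := by
    rw [hφ1]
    have : HasDerivAt (fun t : ℝ => ∑ j, ζ j * pd j u (z + t • ζ))
        (∑ j, ζ j * ∑ i, ζ i * pd i (pd j u) (z + (0:ℝ) • ζ)) 0 :=
      HasDerivAt.fun_sum fun j _ => (hd1 _ (C2_pd_diff hu j) 0).const_mul (ζ j)
    rw [this.deriv, Finset.sum_comm]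
    simp only [zero_smul, add_zero, Finset.mul_sum]
    refine Finset.sum_congr rfl fun i _ => Finset.sum_congr rfl fun j _ => by ring
  have hmax : IsLocalMax φ 0 := by
    have hc : ContinuousAt (fun t : ℝ => z + t • ζ) 0 := (hline 0).continuousAt
    have hz' : IsLocalMax u (z + (0:ℝ) • ζ) := by simpa using hz
    exact IsMaxFilter.comp_tendsto hz' hc
  have hmin : IsLocalMin φ 0 := isLocalMin_of_deriv_deriv_pos (by rw [hφ2]; exact hpos)
    hmax.deriv_eq_zero (hd1 u (C2_diff hu) 0).continuousAt
  -- a local maximum which is also a local minimum forces local constancy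
  have hconst : φ =ᶠ[nhds 0] fun _ => φ 0 := by
    filter_upwards [hmax, hmin] with t h1 h2 using le_antisymm h1 h2
  have : deriv (deriv φ) 0 = 0 := by
    rw [hconst.deriv.deriv_eq]; simp
  linarith

/-- The trace inequality `tr(AH) ≤ 0` for `A` with nonnegative quadratic form and `H` symmetric
with nonpositive quadratic form. -/
lemma trace_nonpos (A H : Fin n → Fin n → ℝ) (hA : ∀ ζ : Fin n → ℝ, 0 ≤ ∑ i, ∑ j, A i j * ζ i * ζ j)
    (hs : ∀ i j, H i j = H j i) (hH : ∀ ζ : Fin n → ℝ, ∑ i, ∑ j, ζ i * ζ j * H i j ≤ 0) :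
    ∑ i, ∑ j, A i j * H i j ≤ 0 := by
  have hps : (Matrix.of fun i j => -H i j).PosSemidef := by
    refine Matrix.PosSemidef.of_dotProduct_mulVec_nonneg ?_ fun ζ => ?_
    · ext i j; simp [hs i j]
    · have := hH ζ
      simp only [dotProduct, Matrix.mulVec, Matrix.of_apply, Finset.mul_sum, star_trivial]
      have e : ∑ i, ∑ j, ζ i * (-H i j * ζ j) = -∑ i, ∑ j, ζ i * ζ j * H i j := by
        simp only [← Finset.sum_neg_distrib]
        refine Finset.sum_congr rfl fun i _ => Finset.sum_congr rfl fun j _ => by ring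
      rw [e]; linarith
  obtain ⟨B, hB⟩ : ∃ B : Matrix (Fin n) (Fin n) ℝ, (Matrix.of fun i j => -H i j) = B.conjTranspose * B := by
    open scoped MatrixOrder in exact CStarAlgebra.nonneg_iff_eq_star_mul_self.mp hps.nonneg
  have hent : ∀ i j, H i j = -∑ k, B k i * B k j := by
    intro i j
    have := congrFun (congrFun hB i) j
    simp [Matrix.mul_apply] at this
    linarith
  have e : ∑ i, ∑ j, A i j * H i j = -∑ k, ∑ i, ∑ j, A i j * B k i * B k j := by
    calc _ = ∑ i, ∑ j, ∑ k, -(A i j * B k i * B k j) := by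
          refine Finset.sum_congr rfl fun i _ => Finset.sum_congr rfl fun j _ => ?_
          rw [hent, mul_neg, Finset.mul_sum, ← Finset.sum_neg_distrib]
          exact Finset.sum_congr rfl fun k _ => by ring
      _ = ∑ i, ∑ k, ∑ j, -(A i j * B k i * B k j) :=
          Finset.sum_congr rfl fun i _ => Finset.sum_comm
      _ = _ := by
          rw [Finset.sum_comm]
          simp only [Finset.sum_neg_distrib]
  rw [e]
  linarith [Finset.sum_nonneg fun k (_ : k ∈ Finset.univ) => hA (B k)]

end Calculus

/-! ### The operator acting on exponentials -/

section Operators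

variable {n : ℕ} (a : (Fin n → ℝ) → Fin n → Fin n → ℝ) (b : (Fin n → ℝ) → Fin n → ℝ)
  (c : (Fin n → ℝ) → ℝ)

/-- The quotient `e^{-w} P(e^w)`, a quadratic first order expression in the logarithm `w`. -/
def logP (w : (Fin n → ℝ) → ℝ) (x : Fin n → ℝ) : ℝ :=
  -(∑ i, ∑ j, a x i j * (pd i (pd j w) x + pd i w x * pd j w x)) + ∑ i, b x i * pd i w x + c x

/-- The part of `e^{-w} P(e^w F)` containing derivatives of `F`: the Doob transform of `P` by
`e^w`, without its zeroth order term. -/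
def Lop (w F : (Fin n → ℝ) → ℝ) (x : Fin n → ℝ) : ℝ :=
  -(∑ i, ∑ j, a x i j * (pd i (pd j F) x + pd i w x * pd j F x + pd j w x * pd i F x))
    + ∑ i, b x i * pd i F x

/-- The quadratic form `∑ a_{ij} ∂_iF ∂_jF`. -/
def Gam (F : (Fin n → ℝ) → ℝ) (x : Fin n → ℝ) : ℝ := ∑ i, ∑ j, a x i j * pd i F x * pd j F x

lemma Pop_exp {w : (Fin n → ℝ) → ℝ} (hw : ContDiff ℝ 2 w) (x : Fin n → ℝ) :
    Pop a b c (fun y => Real.exp (w y)) x = Real.exp (w x) * logP a b c w x := by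
  simp only [Pop, logP, pd2_exp hw]
  simp only [pd_exp (C2_diff hw), mul_add, mul_neg, Finset.mul_sum]
  congr 1
  · congr 1
    · congr 1
      exact Finset.sum_congr rfl fun i _ => Finset.sum_congr rfl fun j _ => by ring
    · exact Finset.sum_congr rfl fun i _ => by ring
  · ring

lemma Pop_exp_mul {w F : (Fin n → ℝ) → ℝ} (hw : ContDiff ℝ 2 w) (hF : ContDiff ℝ 2 F)
    (x : Fin n → ℝ) :
    Pop a b c (fun y => Real.exp (w y) * F y) x
      = Real.exp (w x) * (Lop a b w F x + logP a b c w x * F x) := by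
  have h1 : ∑ i, ∑ j, a x i j * pd i (pd j fun y => Real.exp (w y) * F y) x
      = Real.exp (w x) * (∑ i, ∑ j, a x i j *
          (pd i (pd j F) x + pd i w x * pd j F x + pd j w x * pd i F x))
        + Real.exp (w x) * F x * ∑ i, ∑ j, a x i j * (pd i (pd j w) x + pd i w x * pd j w x) := by
    simp only [pd2_mul hw.exp hF, pd2_exp hw]
    simp only [pd_exp (C2_diff hw), Finset.mul_sum,
      ← Finset.sum_add_distrib]
    exact Finset.sum_congr rfl fun i _ => Finset.sum_congr rfl fun j _ => by ring
  have h2 : ∑ i, b x i * pd i (fun y => Real.exp (w y) * F y) x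
      = Real.exp (w x) * (∑ i, b x i * pd i F x)
        + Real.exp (w x) * F x * ∑ i, b x i * pd i w x := by
    simp only [pd_mul (C2_diff hw).exp (C2_diff hF), pd_exp (C2_diff hw), Finset.mul_sum,
      ← Finset.sum_add_distrib]
    exact Finset.sum_congr rfl fun i _ => by ring
  simp only [Pop, Lop, logP, h1, h2]
  ring

lemma Lop_mul_self {w F : (Fin n → ℝ) → ℝ} (hF : ContDiff ℝ 2 F) (x : Fin n → ℝ) :
    Lop a b w (fun y => F y * F y) x = 2 * F x * Lop a b w F x - 2 * Gam a F x := by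
  have h1 : ∑ i, ∑ j, a x i j * (pd i (pd j fun y => F y * F y) x
        + pd i w x * pd j (fun y => F y * F y) x + pd j w x * pd i (fun y => F y * F y) x)
      = 2 * F x * (∑ i, ∑ j, a x i j *
          (pd i (pd j F) x + pd i w x * pd j F x + pd j w x * pd i F x))
        + 2 * ∑ i, ∑ j, a x i j * pd i F x * pd j F x := by
    simp only [pd2_mul hF hF]
    simp only [pd_mul (C2_diff hF) (C2_diff hF), Finset.mul_sum,
      ← Finset.sum_add_distrib]
    exact Finset.sum_congr rfl fun i _ => Finset.sum_congr rfl fun j _ => by ring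
  have h2 : ∑ i, b x i * pd i (fun y => F y * F y) x = 2 * F x * ∑ i, b x i * pd i F x := by
    simp only [pd_mul (C2_diff hF) (C2_diff hF), Finset.mul_sum]
    exact Finset.sum_congr rfl fun i _ => by ring
  simp only [Lop, Gam, h1, h2]
  ring

lemma Lop_add {w F H : (Fin n → ℝ) → ℝ} (hF : ContDiff ℝ 2 F) (hH : ContDiff ℝ 2 H)
    (x : Fin n → ℝ) :
    Lop a b w (fun y => F y + H y) x = Lop a b w F x + Lop a b w H x := by
  have h1 : ∑ i, ∑ j, a x i j * (pd i (pd j fun y => F y + H y) x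
        + pd i w x * pd j (fun y => F y + H y) x + pd j w x * pd i (fun y => F y + H y) x)
      = (∑ i, ∑ j, a x i j *
          (pd i (pd j F) x + pd i w x * pd j F x + pd j w x * pd i F x))
        + ∑ i, ∑ j, a x i j *
          (pd i (pd j H) x + pd i w x * pd j H x + pd j w x * pd i H x) := by
    simp only [pd2_add hF hH]
    simp only [pd_add (C2_diff hF) (C2_diff hH), ← Finset.sum_add_distrib]
    exact Finset.sum_congr rfl fun i _ => Finset.sum_congr rfl fun j _ => by ring
  have h2 : ∑ i, b x i * pd i (fun y => F y + H y) x
      = (∑ i, b x i * pd i F x) + ∑ i, b x i * pd i H x := by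
    simp only [pd_add (C2_diff hF) (C2_diff hH), ← Finset.sum_add_distrib]
    exact Finset.sum_congr rfl fun i _ => by ring
  simp only [Lop, h1, h2]
  ring

/-- `logP` is concave along convex combinations; the defect is `s t` times the quadratic form
of the gradient of the difference. -/
lemma logP_convex {w v : (Fin n → ℝ) → ℝ} (hw : ContDiff ℝ 2 w) (hv : ContDiff ℝ 2 v)
    {s t : ℝ} (hst : s + t = 1) (x : Fin n → ℝ) :
    logP a b c (fun y => s * w y + t * v y) x
      = s * logP a b c w x + t * logP a b c v x
        + s * t * Gam a (fun y => w y + (-1) * v y) x := by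
  have hsw : ContDiff ℝ 2 fun y => s * w y := contDiff_const.mul hw
  have htv : ContDiff ℝ 2 fun y => t * v y := contDiff_const.mul hv
  have hmv : ContDiff ℝ 2 fun y => (-1) * v y := contDiff_const.mul hv
  have hs : s = 1 - t := by linarith
  have h1 : ∑ i, ∑ j, a x i j * (pd i (pd j fun y => s * w y + t * v y) x
        + pd i (fun y => s * w y + t * v y) x * pd j (fun y => s * w y + t * v y) x)
      + s * t * Gam a (fun y => w y + (-1) * v y) x
      = s * (∑ i, ∑ j, a x i j * (pd i (pd j w) x + pd i w x * pd j w x))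
        + t * ∑ i, ∑ j, a x i j * (pd i (pd j v) x + pd i v x * pd j v x) := by
    simp only [Gam, pd2_add hsw htv, pd2_const_mul hw, pd2_const_mul hv]
    simp only [pd_add (C2_diff hsw) (C2_diff htv), pd_const_mul (C2_diff hw), pd_const_mul (C2_diff hv),
      pd_add (C2_diff hw) (C2_diff hmv), Finset.mul_sum, ← Finset.sum_add_distrib]
    refine Finset.sum_congr rfl fun i _ => Finset.sum_congr rfl fun j _ => ?_
    subst hs
    ring
  have h2 : ∑ i, b x i * pd i (fun y => s * w y + t * v y) x
      = s * (∑ i, b x i * pd i w x) + t * ∑ i, b x i * pd i v x := by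
    simp only [pd_add (C2_diff hsw) (C2_diff htv), pd_const_mul (C2_diff hw),
      pd_const_mul (C2_diff hv), Finset.mul_sum, ← Finset.sum_add_distrib]
    exact Finset.sum_congr rfl fun i _ => by ring
  simp only [logP, h2]
  subst hs
  linear_combination (-1 : ℝ) * h1

end Operators

/-! ### The strong maximum principle -/

section MaximumPrinciple

variable {n : ℕ}

/-- The **strong maximum principle** for subsolutions on the whole space attaining their maximum:
they are constant.
A Gaussian barrier is compared on an annulus whose inner ball avoids the maximum and whose outer
ball contains a maximum point. -/
lemma strong_max {a : (Fin n → ℝ) → Fin n → Fin n → ℝ} {B : (Fin n → ℝ) → Fin n → ℝ}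
    (ha : ∀ i j, Continuous fun x => a x i j) (hB : ∀ i, Continuous fun x => B x i)
    {a₀ : ℝ} (ha₀ : 0 < a₀)
    (hell : ∀ x ζ : Fin n → ℝ, a₀ * ∑ i, ζ i ^ 2 ≤ ∑ i, ∑ j, a x i j * ζ i * ζ j)
    {g : (Fin n → ℝ) → ℝ} (hg : ContDiff ℝ 2 g)
    (hsub : ∀ x, -(∑ i, ∑ j, a x i j * pd i (pd j g) x) + ∑ i, B x i * pd i g x ≤ 0)
    {x₀ : Fin n → ℝ} (hx₀ : ∀ x, g x ≤ g x₀) (y : Fin n → ℝ) : g y = g x₀ := by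
  by_contra hne
  have hlt : g y < g x₀ := lt_of_le_of_ne (hx₀ y) hne
  set M := g x₀ with hM
  set s : (Fin n → ℝ) → ℝ := fun x => ∑ i, (x i - y i) ^ 2 with hs
  have hsC : ContDiff ℝ 2 s := by fun_prop
  -- on a ball around `y` the function stays below `M - δ`
  obtain ⟨δ, hδ, hgy⟩ : ∃ δ > 0, g y < M - δ := ⟨(M - g y) / 2, by linarith, by linarith⟩
  obtain ⟨r, hr, hball⟩ := Metric.isOpen_iff.mp (isOpen_lt hg.continuous continuous_const)
    y (show g y < M - δ from hgy)
  have hin : ∀ x, s x < r ^ 2 → g x < M - δ := by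
    intro x hx
    refine hball ?_
    rw [Metric.mem_ball, dist_pi_lt_iff hr]
    intro i
    rw [Real.dist_eq]
    refine abs_lt_of_sq_lt_sq (lt_of_le_of_lt ?_ hx) hr.le
    exact Finset.single_le_sum (f := fun i => (x i - y i) ^ 2) (fun _ _ => sq_nonneg _)
      (Finset.mem_univ i)
  set R : ℝ := s x₀ + 1 with hR
  set K : Set (Fin n → ℝ) := {x | s x ≤ R} with hK
  have hs0 : ∀ x, 0 ≤ s x := fun x => Finset.sum_nonneg fun _ _ => sq_nonneg _
  have hKc : IsCompact K := by
    refine Metric.isCompact_of_isClosed_isBounded (isClosed_le hsC.continuous continuous_const) ?_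
    refine (Metric.isBounded_closedBall (x := y) (r := R + 1)).subset fun x hx => ?_
    have hx' : s x ≤ R := hx
    have hR1 : 0 ≤ R + 1 := by linarith [hs0 x]
    rw [Metric.mem_closedBall, dist_pi_le_iff hR1]
    intro i
    rw [Real.dist_eq]
    have h1 : (x i - y i) ^ 2 ≤ s x :=
      Finset.single_le_sum (f := fun i => (x i - y i) ^ 2) (fun _ _ => sq_nonneg _)
        (Finset.mem_univ i)
    exact abs_le_of_sq_le_sq (by nlinarith [hs0 x]) hR1
  have hx₀K : x₀ ∈ K := by show s x₀ ≤ s x₀ + 1; linarith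
  obtain ⟨C, hC⟩ : ∃ C, ∀ x ∈ K, (∑ i, a x i i) - ∑ i, B x i * (x i - y i) ≤ C := by
    have hcont : Continuous fun x => (∑ i, a x i i) - ∑ i, B x i * (x i - y i) := by
      fun_prop
    obtain ⟨C, hC⟩ := hKc.bddAbove_image hcont.continuousOn
    exact ⟨C, fun x hx => hC ⟨x, hx, rfl⟩⟩
  have hr2 : 0 < a₀ * r ^ 2 := by positivity
  set α : ℝ := (|C| + 1) / (a₀ * r ^ 2) with hα
  have hαpos : 0 < α := by positivity
  have hαC : C < 2 * α * (a₀ * r ^ 2) := by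
    have : α * (a₀ * r ^ 2) = |C| + 1 := div_mul_cancel₀ _ hr2.ne'
    nlinarith [le_abs_self C, abs_nonneg C]
  -- the rate `α` is chosen so that the Gaussian `e^{-α|x-y|²}` is a strict subsolution on the annulus
  set W : (Fin n → ℝ) → ℝ := fun x => (-α) * s x with hW
  have hWC : ContDiff ℝ 2 W := contDiff_const.mul hsC
  have hWE : ContDiff ℝ 2 fun x => Real.exp (W x) := hWC.exp
  have hs1 : ∀ i, pd i s = fun x => 2 * (x i - y i) := by
    intro i; funext x
    have : HasFDerivAt s (∑ k, (2 * (x k - y k)) • (ContinuousLinearMap.proj k : (Fin n → ℝ) →L[ℝ] ℝ)) x := by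
      refine HasFDerivAt.fun_sum fun k _ => ?_
      have h1 : HasFDerivAt (fun x : Fin n → ℝ => x k - y k)
        (ContinuousLinearMap.proj k : (Fin n → ℝ) →L[ℝ] ℝ) x :=
        (ContinuousLinearMap.proj (R := ℝ) (φ := fun _ : Fin n => ℝ) k).hasFDerivAt.sub_const _
      simpa using h1.pow 2
    simp [pd, this.fderiv, Pi.single_apply]
  have hs2 : ∀ i j x, pd i (pd j s) x = if i = j then 2 else 0 := by
    intro i j x
    rw [hs1]
    have h1 : HasFDerivAt (fun x : Fin n → ℝ => 2 * (x j - y j))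
        ((2 : ℝ) • (ContinuousLinearMap.proj j : (Fin n → ℝ) →L[ℝ] ℝ)) x :=
      ((ContinuousLinearMap.proj (R := ℝ) (φ := fun _ : Fin n => ℝ) j).hasFDerivAt.sub_const
        _).const_mul 2
    simp [pd, h1.fderiv, Pi.single_apply, eq_comm]
  have hbar : ∀ x ∈ K, r ^ 2 ≤ s x →
      -(∑ i, ∑ j, a x i j * pd i (pd j fun x => Real.exp (W x)) x)
        + ∑ i, B x i * pd i (fun x => Real.exp (W x)) x < 0 := by
    intro x hx hrx
    have h1 : ∑ i, ∑ j, a x i j * pd i (pd j fun x => Real.exp (W x)) x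
        = Real.exp (W x) * (4 * α ^ 2 * (∑ i, ∑ j, a x i j * (x i - y i) * (x j - y j))
          - 2 * α * ∑ i, a x i i) := by
      have h0 : ∑ i, a x i i = ∑ i, ∑ j, a x i j * if i = j then 1 else 0 := by simp
      rw [h0]
      simp only [pd2_exp hWC]
      simp only [hW, pd2_const_mul hsC, hs2]
      simp only [pd_const_mul (C2_diff hsC), hs1,
        Finset.mul_sum, ← Finset.sum_sub_distrib]
      refine Finset.sum_congr rfl fun i _ => Finset.sum_congr rfl fun j _ => ?_
      split_ifs <;> ring
    have h2 : ∑ i, B x i * pd i (fun x => Real.exp (W x)) x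
        = Real.exp (W x) * (-(2 * α) * ∑ i, B x i * (x i - y i)) := by
      simp only [pd_exp (C2_diff hWC)]
      simp only [hW, pd_const_mul (C2_diff hsC), hs1, Finset.mul_sum]
      exact Finset.sum_congr rfl fun i _ => by ring
    rw [h1, h2]
    have h3 := hell x (fun i => x i - y i)
    have h4 := hC x hx
    have h5 : a₀ * r ^ 2 ≤ a₀ * s x := mul_le_mul_of_nonneg_left hrx ha₀.le
    have h6 : a₀ * r ^ 2 ≤ ∑ i, ∑ j, a x i j * (x i - y i) * (x j - y j) := h5.trans h3
    have h7 : 0 < Real.exp (W x) := Real.exp_pos _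
    have h8 : 2 * α * (a₀ * r ^ 2)
        ≤ 2 * α * ∑ i, ∑ j, a x i j * (x i - y i) * (x j - y j) :=
      mul_le_mul_of_nonneg_left h6 (by positivity)
    have h9 : (∑ i, a x i i) - (∑ i, B x i * (x i - y i))
        - 2 * α * ∑ i, ∑ j, a x i j * (x i - y i) * (x j - y j) < 0 := by linarith
    have h10 := mul_neg_of_pos_of_neg (mul_pos h7 (mul_pos two_pos hαpos)) h9
    linarith
  have hGC : ContDiff ℝ 2 fun x => g x + δ * Real.exp (W x) :=
    hg.add (contDiff_const.mul hWE)
  obtain ⟨z, hzK, hzmax⟩ := hKc.exists_isMaxOn ⟨x₀, hx₀K⟩ hGC.continuous.continuousOn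
  have hz0 : M + δ * Real.exp (W x₀) ≤ g z + δ * Real.exp (W z) := hzmax hx₀K
  have hexp0 : 0 < Real.exp (W x₀) := Real.exp_pos _
  have hzr : r ^ 2 ≤ s z := by
    by_contra! hcon
    have h1 := hin z hcon
    have h2 : Real.exp (W z) ≤ 1 := Real.exp_le_one_iff.mpr (by
      simp only [hW]; nlinarith [hs0 z])
    nlinarith
  have hzR : s z < R := by
    by_contra! hcon
    have h2 : Real.exp (W z) < Real.exp (W x₀) := Real.exp_lt_exp.mpr (by
      simp only [hW]; nlinarith)
    nlinarith [hx₀ z]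
  have hloc : IsLocalMax (fun x => g x + δ * Real.exp (W x)) z := by
    refine hzmax.isLocalMax ?_
    filter_upwards [(isOpen_lt hsC.continuous continuous_const).mem_nhds hzR] with x hx using le_of_lt hx
  obtain ⟨hgrad, hhess⟩ := localMax_cond hGC hloc
  have htr := trace_nonpos (a z) _ (fun ζ => le_trans
    (mul_nonneg ha₀.le (Finset.sum_nonneg fun _ _ => sq_nonneg _)) (hell z ζ))
    (fun i j => pd_comm hGC i j z) hhess
  have hδE : ContDiff ℝ 2 fun x => δ * Real.exp (W x) := contDiff_const.mul hWE
  have e1 : ∑ i, ∑ j, a z i j * pd i (pd j fun x => g x + δ * Real.exp (W x)) z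
      = (∑ i, ∑ j, a z i j * pd i (pd j g) z)
        + δ * ∑ i, ∑ j, a z i j * pd i (pd j fun x => Real.exp (W x)) z := by
    simp only [pd2_add hg hδE, pd2_const_mul hWE, Finset.mul_sum, ← Finset.sum_add_distrib]
    exact Finset.sum_congr rfl fun i _ => Finset.sum_congr rfl fun j _ => by ring
  have e2 : (0 : ℝ) = (∑ i, B z i * pd i g z)
        + δ * ∑ i, B z i * pd i (fun x => Real.exp (W x)) z := by
    have : ∑ i, B z i * pd i (fun x => g x + δ * Real.exp (W x)) z = 0 :=
      Finset.sum_eq_zero fun i _ => by rw [hgrad i, mul_zero]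
    rw [← this]
    simp only [pd_add (C2_diff hg) (C2_diff hδE), pd_const_mul (C2_diff hWE), Finset.mul_sum,
      ← Finset.sum_add_distrib]
    exact Finset.sum_congr rfl fun i _ => by ring
  have hb := mul_neg_of_pos_of_neg hδ (hbar z hzK hzr)
  have hz2 := hsub z
  linarith

/-- A continuous periodic function attains its maximum. -/
lemma periodic_max {g : (Fin n → ℝ) → ℝ} (hg : Continuous g) (hp : ZPeriodic g) :
    ∃ x₀, ∀ x, g x ≤ g x₀ := by
  obtain ⟨x₀, -, hx₀⟩ := (isCompact_Icc (a := (0 : Fin n → ℝ)) (b := 1)).exists_isMaxOn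
    ⟨0, by simp⟩ hg.continuousOn
  refine ⟨x₀, fun x => ?_⟩
  have h1 : g x = g fun i => Int.fract (x i) := by
    rw [← hp (fun i => Int.fract (x i)) fun i => ⌊x i⌋]
    congr 1
    funext i
    simp [Int.fract_add_floor]
  rw [h1]
  exact hx₀ ⟨fun i => Int.fract_nonneg _, fun i => (Int.fract_lt_one _).le⟩

end MaximumPrinciple

/-! ### Positive supersolutions and Bloch solutions -/

section Bloch

variable {n : ℕ} {a : (Fin n → ℝ) → Fin n → Fin n → ℝ} {b : (Fin n → ℝ) → Fin n → ℝ}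
  {c : (Fin n → ℝ) → ℝ}

lemma dotR_contDiff (ξ : Fin n → ℝ) : ContDiff ℝ 2 (dotR ξ) := by
  unfold dotR; fun_prop

lemma dotCR_contDiff (k : Fin n → ℂ) : ContDiff ℝ 2 (dotCR k) := by
  unfold dotCR
  exact ContDiff.sum fun i _ => contDiff_const.mul
    (Complex.ofRealCLM.contDiff.comp (contDiff_apply ℝ ℝ i))

lemma bloch_contDiff {p : (Fin n → ℝ) → ℂ} (hp : ContDiff ℝ 2 p) (k : Fin n → ℂ) :
    ContDiff ℝ 2 fun y => Complex.exp (Complex.I * dotCR k y) * p y :=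
  (contDiff_const.mul (dotCR_contDiff k)).cexp.mul hp

lemma PopC_re {u : (Fin n → ℝ) → ℂ} (hu : ContDiff ℝ 2 u) (x : Fin n → ℝ) :
    Pop a b c (fun y => (u y).re) x = (PopC a b c u x).re := by
  have h1 : ∀ i, pd i (fun y => (u y).re) x = (pd i u x).re := fun i =>
    congrFun (pd_clm Complex.reCLM (C2_diff hu) i) x
  have h2 : ∀ i j, pd i (pd j fun y => (u y).re) x = (pd i (pd j u) x).re := fun i j =>
    pd2_clm Complex.reCLM hu i j x
  simp [Pop, PopC, h1, h2]

lemma PopC_im {u : (Fin n → ℝ) → ℂ} (hu : ContDiff ℝ 2 u) (x : Fin n → ℝ) :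
    Pop a b c (fun y => (u y).im) x = (PopC a b c u x).im := by
  have h1 : ∀ i, pd i (fun y => (u y).im) x = (pd i u x).im := fun i =>
    congrFun (pd_clm Complex.imCLM (C2_diff hu) i) x
  have h2 : ∀ i j, pd i (pd j fun y => (u y).im) x = (pd i (pd j u) x).im := fun i j =>
    pd2_clm Complex.imCLM hu i j x
  simp [Pop, PopC, h1, h2]

lemma PopC_ofReal {u : (Fin n → ℝ) → ℝ} (hu : ContDiff ℝ 2 u) (x : Fin n → ℝ) :
    PopC a b c (fun y => (u y : ℂ)) x = (Pop a b c u x : ℂ) := by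
  have h1 : ∀ i, pd i (fun y => (u y : ℂ)) x = Complex.ofReal (pd i u x) := fun i =>
    congrFun (pd_clm Complex.ofRealCLM (C2_diff hu) i) x
  have h2 : ∀ i j, pd i (pd j fun y => (u y : ℂ)) x = Complex.ofReal (pd i (pd j u) x) := fun i j =>
    pd2_clm Complex.ofRealCLM hu i j x
  simp [Pop, PopC, h1, h2]

lemma Gam_nonneg {a₀ : ℝ} (ha₀ : 0 < a₀)
    (hell : ∀ x ζ : Fin n → ℝ, a₀ * ∑ i, ζ i ^ 2 ≤ ∑ i, ∑ j, a x i j * ζ i * ζ j)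
    (F : (Fin n → ℝ) → ℝ) (x : Fin n → ℝ) : 0 ≤ Gam a F x :=
  le_trans (mul_nonneg ha₀.le (Finset.sum_nonneg fun _ _ => sq_nonneg _))
    (hell x fun i => pd i F x)

lemma pd_of_Gam {a₀ : ℝ} (ha₀ : 0 < a₀)
    (hell : ∀ x ζ : Fin n → ℝ, a₀ * ∑ i, ζ i ^ 2 ≤ ∑ i, ∑ j, a x i j * ζ i * ζ j)
    {F : (Fin n → ℝ) → ℝ} {x : Fin n → ℝ} (h : Gam a F x ≤ 0) (i : Fin n) : pd i F x = 0 := by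
  have h1 : a₀ * ∑ i, pd i F x ^ 2 ≤ 0 := (hell x fun i => pd i F x).trans h
  have h2 : ∑ i, pd i F x ^ 2 ≤ 0 := by
    by_contra! hc
    linarith [mul_pos ha₀ hc]
  have h3 := Finset.single_le_sum (f := fun i => pd i F x ^ 2) (fun _ _ => sq_nonneg _)
    (Finset.mem_univ i)
  exact pow_eq_zero_iff two_ne_zero |>.mp (le_antisymm (h3.trans h2) (sq_nonneg _))

/-- If `logP w ≥ 0`, where `F, H` satisfy `P(e^w F) = P(e^w H) = 0` and `F² + H²` is periodic and
does not vanish identically, then `F` and `H` are constant and `logP w = 0`. -/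
lemma rigidity (hP : IsPeriodicElliptic a b c) {w F H : (Fin n → ℝ) → ℝ}
    (hw : ContDiff ℝ 2 w) (hF : ContDiff ℝ 2 F) (hH : ContDiff ℝ 2 H)
    (hpos : ∀ x, 0 ≤ logP a b c w x)
    (hPF : ∀ x, Pop a b c (fun y => Real.exp (w y) * F y) x = 0)
    (hPH : ∀ x, Pop a b c (fun y => Real.exp (w y) * H y) x = 0)
    (hper : ZPeriodic fun y => F y * F y + H y * H y)
    (hne : ∃ x, F x * F x + H x * H x ≠ 0) :
    (∀ x, logP a b c w x = 0) ∧ (∀ x y, F x = F y) ∧ ∀ x y, H x = H y := by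
  obtain ⟨haC, hbC, -, -, -, -, a₀, ha₀, hell⟩ := hP
  have hFF : ContDiff ℝ 2 fun y => F y * F y := hF.mul hF
  have hHH : ContDiff ℝ 2 fun y => H y * H y := hH.mul hH
  have hg : ContDiff ℝ 2 fun y => F y * F y + H y * H y := hFF.add hHH
  have hLz : ∀ {G : (Fin n → ℝ) → ℝ}, ContDiff ℝ 2 G →
      (∀ x, Pop a b c (fun y => Real.exp (w y) * G y) x = 0) →
      ∀ x, Lop a b w G x = -(logP a b c w x * G x) := by
    intro G hG h x
    have := h x
    rw [Pop_exp_mul a b c hw hG, mul_eq_zero] at this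
    linarith [this.resolve_left (Real.exp_pos _).ne']
  have hL : ∀ x, Lop a b w (fun y => F y * F y + H y * H y) x
      = -2 * logP a b c w x * (F x * F x + H x * H x) - 2 * Gam a F x - 2 * Gam a H x := by
    intro x
    rw [Lop_add a b hFF hHH, Lop_mul_self a b hF, Lop_mul_self a b hH, hLz hF hPF, hLz hH hPH]
    ring
  have hG0 := Gam_nonneg ha₀ hell
  have hgn : ∀ x, 0 ≤ F x * F x + H x * H x := fun x =>
    add_nonneg (mul_self_nonneg _) (mul_self_nonneg _)
  have hLle : ∀ x, Lop a b w (fun y => F y * F y + H y * H y) x ≤ 0 := by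
    intro x
    rw [hL]
    linarith [mul_nonneg (hpos x) (hgn x), hG0 F x, hG0 H x]
  obtain ⟨x₀, hx₀⟩ := periodic_max hg.continuous hper
  have hconst := strong_max (a := a)
    (B := fun x i => b x i - ∑ j, (a x i j + a x j i) * pd j w x)
    (fun i j => (haC i j).continuous)
    (fun i => (hbC i).continuous.sub <| continuous_finsetSum _ fun j _ =>
      ((haC i j).continuous.add (haC j i).continuous).mul (pd_continuous (hw.of_le (by norm_num)) j))
    ha₀ hell hg (fun x => ?_) hx₀
  · set M := F x₀ * F x₀ + H x₀ * H x₀ with hM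
    have hMpos : 0 < M := by
      obtain ⟨x, hx⟩ := hne
      rw [← hconst x]
      exact lt_of_le_of_ne (hgn x) hx.symm
    have hL0 : ∀ x, Lop a b w (fun y => F y * F y + H y * H y) x = 0 := by
      intro x
      have : (fun y => F y * F y + H y * H y) = fun _ => M := funext hconst
      rw [this]
      have h1 : ∀ i, pd i (fun _ : Fin n → ℝ => M) = fun _ => 0 := by
        intro i; funext x; simp [pd]
      have h2 : ∀ i, pd i (fun _ : Fin n → ℝ => (0 : ℝ)) = fun _ => 0 := by
        intro i; funext x; simp [pd]
      simp [Lop, h1, h2]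
    have hall : ∀ x, logP a b c w x = 0 ∧ Gam a F x ≤ 0 ∧ Gam a H x ≤ 0 := by
      intro x
      have h := hL x
      rw [hL0 x, hconst x] at h
      have h1 := mul_nonneg (hpos x) hMpos.le
      have h2 := hG0 F x
      have h3 := hG0 H x
      have h4 : logP a b c w x * M = 0 := by linarith
      exact ⟨(mul_eq_zero.mp h4).resolve_right hMpos.ne', by linarith, by linarith⟩
    exact ⟨fun x => (hall x).1,
      const_of_pd (C2_diff hF) fun i x => pd_of_Gam ha₀ hell (hall x).2.1 i,
      const_of_pd (C2_diff hH) fun i x => pd_of_Gam ha₀ hell (hall x).2.2 i⟩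
  · -- the drift of the Doob transform, in the non-divergence form of `strong_max`
    refine le_of_eq_of_le ?_ (hLle x)
    have h1 : ∀ G : Fin n → ℝ, ∑ i, (∑ j, (a x i j + a x j i) * pd j w x) * G i
        = ∑ i, ∑ j, a x i j * (pd i w x * G j + pd j w x * G i) := by
      intro G
      have h2 : ∑ i, ∑ j, a x j i * pd j w x * G i = ∑ i, ∑ j, a x i j * pd i w x * G j :=
        Finset.sum_comm
      calc _ = (∑ i, ∑ j, a x i j * pd j w x * G i) + ∑ i, ∑ j, a x j i * pd j w x * G i := by
            simp only [Finset.sum_mul, ← Finset.sum_add_distrib]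
            exact Finset.sum_congr rfl fun i _ => Finset.sum_congr rfl fun j _ => by ring
        _ = _ := by
            rw [h2]
            simp only [← Finset.sum_add_distrib]
            exact Finset.sum_congr rfl fun i _ => Finset.sum_congr rfl fun j _ => by ring
    simp only [Lop, sub_mul, Finset.sum_sub_distrib, h1, add_assoc, mul_add,
      Finset.sum_add_distrib]
    ring

/-- The real exponents `ξ` carrying a positive quasiperiodic supersolution `e^{ξ·x + q(x)}` of
`P`, which is a solution only if `Λ ξ = 0`. -/
def superSet (a : (Fin n → ℝ) → Fin n → Fin n → ℝ) (b : (Fin n → ℝ) → Fin n → ℝ)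
    (c : (Fin n → ℝ) → ℝ) (Λ : (Fin n → ℝ) → ℝ) : Set (Fin n → ℝ) :=
  {ξ | ∃ q : (Fin n → ℝ) → ℝ, ContDiff ℝ 2 q ∧ ZPeriodic q ∧
    (∀ x, 0 ≤ logP a b c (fun y => dotR ξ y + q y) x) ∧
    ((∀ x, logP a b c (fun y => dotR ξ y + q y) x = 0) → Λ ξ = 0)}

lemma mem_superSet {Λ : (Fin n → ℝ) → ℝ} (hΛ : ∀ ξ, IsPrincipalEV a b c ξ (Λ ξ))
    {ξ : Fin n → ℝ} (hξ : Λ ξ = 0) : ξ ∈ superSet a b c Λ := by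
  obtain ⟨p, hp, hpos, hper, heq⟩ := hΛ ξ
  have hq : ContDiff ℝ 2 fun y => Real.log (p y) := hp.log fun x => (hpos x).ne'
  have h0 : ∀ x, logP a b c (fun y => dotR ξ y + Real.log (p y)) x = 0 := by
    intro x
    have h1 := Pop_exp a b c ((dotR_contDiff ξ).add hq) x
    have h2 : (fun y => Real.exp (dotR ξ y + Real.log (p y)))
        = fun y => Real.exp (dotR ξ y) * p y := by
      funext y; rw [Real.exp_add, Real.exp_log (hpos y)]
    rw [h2, heq x, hξ, zero_mul] at h1
    exact (mul_eq_zero.mp h1.symm).resolve_left (Real.exp_pos _).ne'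
  exact ⟨_, hq, fun x γ => by simp only [hper x γ], fun x => (h0 x).ge, fun _ => hξ⟩

/-- Geometric means of two supersolutions are supersolutions, and solutions only when the two
factors are proportional solutions. -/
lemma superSet_convex (hP : IsPeriodicElliptic a b c) (Λ : (Fin n → ℝ) → ℝ) :
    Convex ℝ (superSet a b c Λ) := by
  obtain ⟨-, -, -, -, -, -, a₀, ha₀, hell⟩ := hP
  rw [convex_iff_forall_pos]
  rintro ξ ⟨q, hq, hqp, hq0, hqe⟩ η ⟨r, hr, hrp, hr0, hre⟩ s t hs ht hst
  have hw := (dotR_contDiff ξ).add hq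
  have hv := (dotR_contDiff η).add hr
  have hcomb : (fun y => dotR (s • ξ + t • η) y + (s * q y + t * r y))
      = fun y => s * (dotR ξ y + q y) + t * (dotR η y + r y) := by
    funext y
    have : dotR (s • ξ + t • η) y = s * dotR ξ y + t * dotR η y := by
      simp only [dotR, Finset.mul_sum, ← Finset.sum_add_distrib]
      exact Finset.sum_congr rfl fun i _ => by simp; ring
    rw [this]; ring
  have hG0 := Gam_nonneg ha₀ hell (fun y => (dotR ξ y + q y) + (-1) * (dotR η y + r y))
  refine ⟨fun y => s * q y + t * r y, (contDiff_const.mul hq).add (contDiff_const.mul hr),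
    fun x γ => by simp only [hqp x γ, hrp x γ], ?_, ?_⟩
  · intro x
    rw [hcomb, logP_convex a b c hw hv hst]
    exact add_nonneg (add_nonneg (mul_nonneg hs.le (hq0 x)) (mul_nonneg ht.le (hr0 x)))
      (mul_nonneg (mul_pos hs ht).le (hG0 x))
  · intro h0
    have hall : ∀ x, logP a b c (fun y => dotR ξ y + q y) x = 0 ∧
        Gam a (fun y => (dotR ξ y + q y) + (-1) * (dotR η y + r y)) x ≤ 0 := by
      intro x
      have h := h0 x
      rw [hcomb, logP_convex a b c hw hv hst] at h
      have h1 := mul_nonneg hs.le (hq0 x)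
      have h2 := mul_nonneg ht.le (hr0 x)
      have h3 := mul_nonneg (mul_pos hs ht).le (hG0 x)
      have h4 : s * logP a b c (fun y => dotR ξ y + q y) x = 0 := by linarith
      have h5 : s * t * Gam a (fun y => (dotR ξ y + q y) + (-1) * (dotR η y + r y)) x = 0 := by
        linarith
      exact ⟨(mul_eq_zero.mp h4).resolve_left hs.ne',
        ((mul_eq_zero.mp h5).resolve_left (mul_pos hs ht).ne').le⟩
    have hconst := const_of_pd (C2_diff (hw.add (contDiff_const.mul hv)))
      fun i x => pd_of_Gam ha₀ hell (hall x).2 i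
    -- evaluating the constant difference at lattice points identifies the exponents
    have hξη : ξ = η := by
      funext i
      have h1 := hconst (0 + fun j => ((Pi.single i 1 : Fin n → ℤ) j : ℝ)) 0
      simp only [hqp 0, hrp 0] at h1
      have h2 : ∀ ζ : Fin n → ℝ,
          dotR ζ (0 + fun j => ((Pi.single i 1 : Fin n → ℤ) j : ℝ)) = ζ i := by
        intro ζ; simp [dotR, Pi.single_apply]
      have h3 : ∀ ζ : Fin n → ℝ, dotR ζ 0 = 0 := by intro ζ; simp [dotR]
      rw [h2, h2, h3, h3] at h1
      linarith
    subst hξη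
    have : s • ξ + t • ξ = ξ := by rw [← add_smul, hst, one_smul]
    rw [this]
    exact hqe fun x => (hall x).1

/-- A Bloch solution whose exponent lies in the tube over `superSet` is a constant multiple of a
positive quasiperiodic solution. -/
lemma fermi_superSet (hP : IsPeriodicElliptic a b c) {Λ : (Fin n → ℝ) → ℝ} {k : Fin n → ℂ}
    (hk : InFermi a b c k) (hs : (fun i => -(k i).im) ∈ superSet a b c Λ) :
    Λ (fun i => -(k i).im) = 0 ∧
      ∃ γ : Fin n → ℤ, k = fun i => -Complex.I * ((-(k i).im : ℝ) : ℂ)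
        + ((2 * Real.pi * γ i : ℝ) : ℂ) := by
  obtain ⟨p, hp, hpp, ⟨x₁, hx₁⟩, hpe⟩ := hk
  obtain ⟨q, hq, hqp, hq0, hqe⟩ := hs
  set ξ : Fin n → ℝ := fun i => -(k i).im with hξ
  set f : (Fin n → ℝ) → ℂ := fun y => Complex.exp (Complex.I * dotCR k y) * p y with hf
  have hfC : ContDiff ℝ 2 f := bloch_contDiff hp k
  set w : (Fin n → ℝ) → ℝ := fun y => dotR ξ y + q y with hw
  have hwC : ContDiff ℝ 2 w := (dotR_contDiff ξ).add hq
  have hre : ContDiff ℝ 2 fun y => (f y).re := Complex.reCLM.contDiff.comp hfC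
  have him : ContDiff ℝ 2 fun y => (f y).im := Complex.imCLM.contDiff.comp hfC
  have hcancel : ∀ (x : Fin n → ℝ) (r : ℝ), Real.exp (w x) * (Real.exp (-w x) * r) = r := by
    intro x r
    rw [← mul_assoc, ← Real.exp_add]; simp
  have hnorm : ∀ x, ‖f x‖ = Real.exp (dotR ξ x) * ‖p x‖ := by
    intro x
    simp only [hf, norm_mul, Complex.norm_exp]
    congr 2
    simp [dotCR, dotR, hξ, Finset.sum_neg_distrib]
  have hsq : ∀ x, (Real.exp (-w x) * (f x).re) * (Real.exp (-w x) * (f x).re)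
      + (Real.exp (-w x) * (f x).im) * (Real.exp (-w x) * (f x).im)
      = (Real.exp (-q x) * ‖p x‖) ^ 2 := by
    intro x
    have h1 : (f x).re * (f x).re + (f x).im * (f x).im = ‖f x‖ ^ 2 := by
      rw [← Complex.normSq_eq_norm_sq, Complex.normSq_apply]
    have h2 : Real.exp (-q x) = Real.exp (-w x) * Real.exp (dotR ξ x) := by
      rw [← Real.exp_add]; congr 1; simp [hw]
    rw [h2, mul_assoc _ _ ‖p x‖, ← hnorm x, mul_pow, ← h1]
    ring
  obtain ⟨hlog, hFc, hHc⟩ := rigidity hP hwC (hwC.neg.exp.mul hre) (hwC.neg.exp.mul him) hq0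
    (fun x => by
      simp only [hcancel]
      rw [PopC_re hfC, hpe x, Complex.zero_re])
    (fun x => by
      simp only [hcancel]
      rw [PopC_im hfC, hpe x, Complex.zero_im])
    (fun x γ => by simp only [hsq, hqp x γ, hpp x γ])
    ⟨x₁, by
      rw [hsq]
      exact pow_ne_zero _ (mul_ne_zero (Real.exp_pos _).ne' (norm_ne_zero_iff.mpr hx₁))⟩
  refine ⟨hqe hlog, ?_⟩
  have hfc : ∀ x y, (Real.exp (-w x) : ℂ) * f x = Real.exp (-w y) * f y := by
    intro x y
    apply Complex.ext
    · simpa only [Complex.re_ofReal_mul] using hFc x y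
    · simpa only [Complex.im_ofReal_mul] using hHc x y
  have hf0 : p 0 ≠ 0 := by
    intro h0
    have h1 := hfc x₁ 0
    have h2 : f 0 = 0 := by simp [hf, h0]
    rw [h2, mul_zero, mul_eq_zero] at h1
    rcases h1 with h1 | h1
    · exact (Real.exp_pos (-w x₁)).ne' (by exact_mod_cast h1)
    · exact (mul_ne_zero (Complex.exp_ne_zero _) hx₁) h1
  -- periodicity at the lattice vector `e_i` forces `e^{i Re k_i} = 1`
  have hint : ∀ i, ∃ m : ℤ, k i = -Complex.I * (ξ i : ℂ) + ((2 * Real.pi * m : ℝ) : ℂ) := by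
    intro i
    have h1 := hfc (0 + fun j => ((Pi.single i 1 : Fin n → ℤ) j : ℝ)) 0
    simp only [hf, hw, hqp 0, hpp 0] at h1
    have h2 : dotR ξ (0 + fun j => ((Pi.single i 1 : Fin n → ℤ) j : ℝ)) = ξ i := by
      simp [dotR, Pi.single_apply]
    have h3 : dotCR k (0 + fun j => ((Pi.single i 1 : Fin n → ℤ) j : ℝ)) = k i := by
      simp [dotCR, Pi.single_apply, apply_ite Complex.ofReal]
    have h4 : dotR ξ 0 = 0 := by simp [dotR]
    have h5 : dotCR k 0 = 0 := by simp [dotCR]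
    rw [h2, h3, h4, h5, ← mul_assoc, ← mul_assoc] at h1
    have h6 := mul_right_cancel₀ hf0 h1
    rw [Complex.ofReal_exp, Complex.ofReal_exp, ← Complex.exp_add, ← Complex.exp_add,
      Complex.exp_eq_exp_iff_exists_int] at h6
    obtain ⟨m, hm⟩ := h6
    refine ⟨m, ?_⟩
    push_cast at hm ⊢
    have h7 : Complex.I * k i = Complex.I * (-Complex.I * (ξ i : ℂ) + 2 * Real.pi * m) := by
      linear_combination hm + (ξ i : ℂ) * Complex.I_mul_I
    exact mul_left_cancel₀ Complex.I_ne_zero h7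
  choose γ hγ using hint
  exact ⟨γ, funext hγ⟩

lemma translate_mem_fermi {Λ : (Fin n → ℝ) → ℝ} (hΛ : ∀ ξ, IsPrincipalEV a b c ξ (Λ ξ))
    {ξ : Fin n → ℝ} (hξ : Λ ξ = 0) (γ : Fin n → ℤ) :
    InFermi a b c fun i => -Complex.I * (ξ i : ℂ) + ((2 * Real.pi * γ i : ℝ) : ℂ) := by
  obtain ⟨p, hp, hpos, hper, heq⟩ := hΛ ξ
  set κ : Fin n → ℂ := fun i => ((2 * Real.pi * γ i : ℝ) : ℂ) with hκ
  set k : Fin n → ℂ := fun i => -Complex.I * (ξ i : ℂ) + κ i with hk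
  have hkdot : ∀ x, Complex.I * dotCR k x = dotR ξ x + Complex.I * dotCR κ x := by
    intro x
    simp only [dotCR, dotR, hk, Complex.ofReal_sum, Finset.mul_sum, ← Finset.sum_add_distrib]
    refine Finset.sum_congr rfl fun i _ => ?_
    push_cast
    linear_combination (-(ξ i : ℂ) * (x i : ℂ)) * Complex.I_mul_I
  have hcirc : ContDiff ℝ 2 fun y => Complex.exp (-(Complex.I * dotCR κ y)) :=
    (contDiff_const.mul (dotCR_contDiff κ)).neg.cexp
  refine ⟨fun y => Complex.exp (-(Complex.I * dotCR κ y)) * (p y : ℂ),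
    hcirc.mul (Complex.ofRealCLM.contDiff.comp hp), ?_, ⟨0, ?_⟩, ?_⟩
  · intro x m
    simp only [hper x m]
    congr 1
    rw [Complex.exp_eq_exp_iff_exists_int]
    refine ⟨-∑ i, γ i * m i, ?_⟩
    simp only [dotCR, hκ, Pi.add_apply]
    push_cast
    simp only [mul_add, Finset.sum_add_distrib, Finset.mul_sum, neg_mul, Finset.sum_mul, neg_add]
    congr 2
    exact Finset.sum_congr rfl fun i _ => by ring
  · exact mul_ne_zero (Complex.exp_ne_zero _) (by exact_mod_cast (hpos 0).ne')
  · intro x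
    have h1 : (fun y => Complex.exp (Complex.I * dotCR k y)
        * (Complex.exp (-(Complex.I * dotCR κ y)) * (p y : ℂ)))
        = fun y => ((Real.exp (dotR ξ y) * p y : ℝ) : ℂ) := by
      funext y
      rw [← mul_assoc, ← Complex.exp_add, hkdot]
      push_cast
      congr 2
      ring
    rw [h1, PopC_ofReal ((dotR_contDiff ξ).exp.mul hp), heq x, hξ]
    simp

end Bloch

/-- If `Λ₀ ≥ 0`, then the intersection of the Fermi surface `F_P` with
the tube `𝒯 = {k : Im k ∈ -G}` equals `{-iξ + γ : ξ ∈ Ξ, γ ∈ (2πℤ)ⁿ}`, where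
`Ξ = {Λ = 0}` and `G = conv(Ξ)`. -/
theorem fermi_in_tube_eq_translates {n : ℕ}
    (a : (Fin n → ℝ) → Fin n → Fin n → ℝ) (b : (Fin n → ℝ) → Fin n → ℝ)
    (c : (Fin n → ℝ) → ℝ) (hP : IsPeriodicElliptic a b c)
    (Λ : (Fin n → ℝ) → ℝ) (hΛ : ∀ ξ, IsPrincipalEV a b c ξ (Λ ξ))
    (hΛ0 : ∃ ξ, 0 ≤ Λ ξ) :
    {k : Fin n → ℂ | InFermi a b c k} ∩
        {k : Fin n → ℂ | (fun i => -(k i).im) ∈ convexHull ℝ {ξ : Fin n → ℝ | Λ ξ = 0}}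
      = {k : Fin n → ℂ | ∃ ξ : Fin n → ℝ, Λ ξ = 0 ∧ ∃ γ : Fin n → ℤ,
          k = fun i => -Complex.I * (ξ i : ℂ) + ((2 * Real.pi * γ i : ℝ) : ℂ)} := by
  ext k
  constructor
  · rintro ⟨hk, htube⟩
    have hs := convexHull_min (fun ξ hξ => mem_superSet hΛ hξ) (superSet_convex hP Λ) htube
    exact ⟨_, fermi_superSet hP hk hs⟩
  · rintro ⟨ξ, hξ, γ, rfl⟩
    refine ⟨translate_mem_fermi hΛ hξ γ, subset_convexHull ℝ _ ?_⟩
    have : (fun i => -(-Complex.I * (ξ i : ℂ) + ((2 * Real.pi * γ i : ℝ) : ℂ)).im) = ξ := by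
      funext i
      rw [Complex.add_im, Complex.ofReal_im]
      simp
    simp only [this]
    exact hξ
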